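/- Let f : ℝⁿ × ℝ^d → ℝⁿ be C¹, and let Λ : ℝ → ℝ^d be C¹ and exponentially bi-asymptotically constant with decay coefficient ρ > 0, with limits λ^± at ±∞. Suppose e⁺ ∈ ℝⁿ satisfies f(e⁺, λ⁺) = 0 and every complex root of the characteristic polynomial of A := D_x f(e⁺, λ⁺) has negative real part. Then for every r > 0 and α ∈ (0, ρ]: every complex root of the characteristic polynomial of the Fréchet derivative of F_{r,α} at (e⁺, 1) (within ℝⁿ × [−1,1]) has negative real part, and −α is such a root; moreover, if in addition α·r < −Re(z) for every complex root z of the characteristic polynomial of A, then every complex root of the characteristic polynomial of the derivative at (e⁺,1) other than −α has real part strictly less than −α. -/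

import Mathlib

open Filter Topology

/-- The time compactification map `g_α(τ) = tanh(ατ/2)`. -/
noncomputable def gcomp (α τ : ℝ) : ℝ := Real.tanh (α * τ / 2)

/-- Its inverse `h_α(s) = (1/α)·ln((1+s)/(1-s))`. -/
noncomputable def hcomp (α s : ℝ) : ℝ := (1 / α) * Real.log ((1 + s) / (1 - s))

/-- `Λ : ℝ → ℝ^d` is exponentially bi-asymptotically constant with decay coefficient `ρ`:
both limits `lim_{τ→+∞} Λ'(τ)·e^{ρτ}` and `lim_{τ→-∞} Λ'(τ)·e^{-ρτ}` exist. -/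
def ExpBiAsympConst {d : ℕ} (Λ : ℝ → Fin d → ℝ) (ρ : ℝ) : Prop :=
  (∃ Lp : Fin d → ℝ, Tendsto (fun τ => Real.exp (ρ * τ) • deriv Λ τ) atTop (𝓝 Lp)) ∧
  (∃ Lm : Fin d → ℝ, Tendsto (fun τ => Real.exp (-ρ * τ) • deriv Λ τ) atBot (𝓝 Lm))

/-- The compactified input `Λ_α : [-1,1] → ℝ^d`, equal to `Λ ∘ h_α` on `(-1,1)` and to the
future/past limits `lp`, `lm` at `s = 1`, `s = -1` respectively. -/
noncomputable def compInput {d : ℕ} (Λ : ℝ → Fin d → ℝ) (lp lm : Fin d → ℝ)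
    (α s : ℝ) : Fin d → ℝ :=
  if s = 1 then lp else if s = -1 then lm else Λ (hcomp α s)

/-- The compactified vector field `F_{r,α}(x,s) = (f(x,Λ_α(s))/r, α(1-s²)/2)` on `ℝⁿ × [-1,1]`. -/
noncomputable def compField {n d : ℕ} (f : (Fin n → ℝ) × (Fin d → ℝ) → Fin n → ℝ)
    (Λ : ℝ → Fin d → ℝ) (lp lm : Fin d → ℝ) (r α : ℝ) :
    (Fin n → ℝ) × ℝ → (Fin n → ℝ) × ℝ :=
  fun p => (r⁻¹ • f (p.1, compInput Λ lp lm α p.2), α * (1 - p.2 ^ 2) / 2)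

/-- The extended phase space `ℝⁿ × [-1,1]`. -/
def compDomain (n : ℕ) : Set ((Fin n → ℝ) × ℝ) := Set.univ ×ˢ Set.Icc (-1) 1

/-- The multiset of complex roots (with multiplicity) of a real polynomial. -/
noncomputable def complexRoots (p : Polynomial ℝ) : Multiset ℂ :=
  (p.map (algebraMap ℝ ℂ)).roots


lemma aux_hcomp_deriv (α s : ℝ) (hs : s ∈ Set.Ioo (-1:ℝ) 1) :
    HasDerivAt (hcomp α) ((2 / α) / (1 + s) ^ 2 * ((1 + s) / (1 - s))) s := by
  obtain ⟨h1, h2⟩ := hs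
  have a1 : (1 + s) ≠ 0 := by linarith
  have a2 : (1 - s) ≠ 0 := by linarith
  have e1 : HasDerivAt (fun s : ℝ => (1 + s) / (1 - s))
      ((1 * (1 - s) - (1 + s) * (-1)) / (1 - s) ^ 2) s :=
    ((hasDerivAt_id' s).const_add 1).div ((hasDerivAt_id' s).const_sub 1) a2
  have e2 := (e1.log (div_ne_zero a1 a2)).const_mul (1 / α)
  have e3 : HasDerivAt (hcomp α) _ s := e2
  convert e3 using 1
  field_simp
  ring

lemma aux_exp_hcomp (α s : ℝ) (hα : 0 < α) (hs : s ∈ Set.Ioo (-1:ℝ) 1) :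
    (1 + s) / (1 - s) = Real.exp (α * hcomp α s) := by
  obtain ⟨h1, h2⟩ := hs
  have : α * hcomp α s = Real.log ((1 + s) / (1 - s)) := by
    unfold hcomp; field_simp
  rw [this, Real.exp_log]
  exact div_pos (by linarith) (by linarith)

lemma aux_hcomp_tendsto (α : ℝ) (hα : 0 < α) : Tendsto (hcomp α) (𝓝[<] 1) atTop := by
  unfold hcomp
  refine Tendsto.const_mul_atTop (by positivity) (Real.tendsto_log_atTop.comp ?_)
  have h1 : Tendsto (fun s : ℝ => 1 + s) (𝓝[<] 1) (𝓝 2) := by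
    have : Tendsto (fun s : ℝ => 1 + s) (𝓝 1) (𝓝 (1 + 1)) := (continuous_const.add continuous_id).tendsto 1
    norm_num at this
    exact this.mono_left nhdsWithin_le_nhds
  have h2 : Tendsto (fun s : ℝ => 1 - s) (𝓝[<] 1) (𝓝[>] 0) := by
    rw [tendsto_nhdsWithin_iff]
    constructor
    · have : Tendsto (fun s : ℝ => 1 - s) (𝓝 1) (𝓝 (1 - 1)) := (continuous_const.sub continuous_id).tendsto 1
      norm_num at this
      exact this.mono_left nhdsWithin_le_nhds
    · filter_upwards [self_mem_nhdsWithin] with s hs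
      simpa using hs
  simpa [div_eq_mul_inv] using h1.pos_mul_atTop (by norm_num) h2.inv_tendsto_nhdsGT_zero

lemma aux_compInput {d : ℕ} (Λ : ℝ → Fin d → ℝ) (ρ : ℝ)
    (hΛ : ContDiff ℝ 1 Λ) (hbac : ExpBiAsympConst Λ ρ) (lp lm : Fin d → ℝ)
    (hp : Tendsto Λ atTop (𝓝 lp)) (α : ℝ) (hα : 0 < α) (hαρ : α ≤ ρ) :
    ∃ D, HasDerivWithinAt (compInput Λ lp lm α) D (Set.Iic 1) 1 := by
  obtain ⟨⟨Lp, hLp⟩, -⟩ := hbac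
  have hmem : Set.Ioo (-1:ℝ) 1 ∈ 𝓝[<] (1:ℝ) := Ioo_mem_nhdsLT (by norm_num)
  have hE : ∀ s ∈ Set.Ioo (-1:ℝ) 1, compInput Λ lp lm α s = Λ (hcomp α s) := by
    intro s hs
    simp [compInput, hs.1.ne', hs.2.ne]
  have hD : ∀ s ∈ Set.Ioo (-1:ℝ) 1, HasDerivAt (compInput Λ lp lm α)
      (((2 / α) / (1 + s) ^ 2) • Real.exp ((α - ρ) * hcomp α s) •
        (Real.exp (ρ * hcomp α s) • deriv Λ (hcomp α s))) s := by
    intro s hs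
    have h1 := ((hΛ.differentiable (by norm_num)) (hcomp α s)).hasDerivAt
    have h2 := h1.scomp s (aux_hcomp_deriv α s hs)
    have h3 : HasDerivAt (compInput Λ lp lm α) _ s := h2.congr_of_eventuallyEq (by
      filter_upwards [isOpen_Ioo.mem_nhds hs] with t ht using hE t ht)
    convert h3 using 1
    rw [aux_exp_hcomp α s hα hs, smul_smul, smul_smul, mul_assoc, ← Real.exp_add]
    ring_nf
  have hh := aux_hcomp_tendsto α hα
  have hc : ∃ c, Tendsto (fun s => Real.exp ((α - ρ) * hcomp α s)) (𝓝[<] 1) (𝓝 c) := by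
    rcases hαρ.eq_or_lt with h | h
    · exact ⟨1, by simp [h]⟩
    · exact ⟨0, Real.tendsto_exp_atBot.comp (hh.const_mul_atTop_of_neg (by linarith))⟩
  obtain ⟨c, hc⟩ := hc
  have hq : Tendsto (fun s : ℝ => (2 / α) / (1 + s) ^ 2) (𝓝[<] 1) (𝓝 ((2 / α) / (1 + 1) ^ 2)) := by
    have : ContinuousAt (fun s : ℝ => (2 / α) / (1 + s) ^ 2) 1 := by
      apply ContinuousAt.div <;> first | fun_prop | norm_num
    exact this.tendsto.mono_left nhdsWithin_le_nhds
  refine ⟨_, hasDerivWithinAt_Iic_of_tendsto_deriv (s := Set.Ioo (-1) 1)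
    (fun s hs => (hD s hs).differentiableAt.differentiableWithinAt) ?_ hmem
    ((hq.smul (hc.smul (hLp.comp hh))).congr' ?_)⟩
  · have : Tendsto (compInput Λ lp lm α) (𝓝[<] 1) (𝓝 lp) := by
      refine (hp.comp hh).congr' ?_
      filter_upwards [hmem] with s hs using (hE s hs).symm
    have h1 : compInput Λ lp lm α 1 = lp := by simp [compInput]
    rw [ContinuousWithinAt, h1]
    exact this.mono_left (nhdsWithin_mono _ fun s hs => hs.2)
  · filter_upwards [hmem] with s hs using (hD s hs).deriv.symm

lemma aux_charpoly {n : ℕ} (A : (Fin n → ℝ) →ₗ[ℝ] (Fin n → ℝ)) (v : Fin n → ℝ) (r α : ℝ)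
    (L : ((Fin n → ℝ) × ℝ) →ₗ[ℝ] ((Fin n → ℝ) × ℝ))
    (hL : ∀ x s, L (x, s) = (r⁻¹ • A x + s • v, -α * s)) :
    L.charpoly = (r⁻¹ • LinearMap.toMatrix' A).charpoly * (Polynomial.X + Polynomial.C α) := by
  let b := (Pi.basisFun ℝ (Fin n)).prod (Module.Basis.singleton Unit ℝ)
  have hM : LinearMap.toMatrix b b L = Matrix.fromBlocks (r⁻¹ • LinearMap.toMatrix' A)
      (Matrix.of fun i _ => v i) 0 (Matrix.of fun _ _ => -α) := by
    ext i j
    rcases i with i | i <;> rcases j with j | j <;>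
      simp [b, LinearMap.toMatrix_apply, hL, LinearMap.toMatrix'_apply]
  rw [← LinearMap.charpoly_toMatrix L b, hM, Matrix.charpoly_fromBlocks_zero₂₁]
  congr 1
  simp [Matrix.charpoly, Matrix.charmatrix]

lemma aux_roots {n : ℕ} (A : (Fin n → ℝ) →ₗ[ℝ] (Fin n → ℝ)) (v : Fin n → ℝ) (r α : ℝ) (hr : 0 < r)
    (L : ((Fin n → ℝ) × ℝ) →ₗ[ℝ] ((Fin n → ℝ) × ℝ))
    (hL : ∀ x s, L (x, s) = (r⁻¹ • A x + s • v, -α * s)) (z : ℂ) :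
    z ∈ complexRoots L.charpoly ↔ (r : ℂ) * z ∈ complexRoots A.charpoly ∨ z = -(α : ℂ) := by
  have hr' : (r : ℂ) ≠ 0 := by exact_mod_cast hr.ne'
  have m1 : L.charpoly.map (algebraMap ℝ ℂ) ≠ 0 := (L.charpoly_monic.map _).ne_zero
  have m2 : A.charpoly.map (algebraMap ℝ ℂ) ≠ 0 := (A.charpoly_monic.map _).ne_zero
  have hA : A.charpoly = (LinearMap.toMatrix' A).charpoly := by
    rw [← LinearMap.charpoly_toMatrix A (Pi.basisFun ℝ (Fin n))]; rfl
  unfold complexRoots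
  rw [Polynomial.mem_roots m1, Polynomial.mem_roots m2, aux_charpoly A v r α L hL, hA]
  simp only [Polynomial.IsRoot, Polynomial.map_mul, Polynomial.eval_mul, mul_eq_zero,
    ← Matrix.charpoly_map, Matrix.eval_charpoly]
  refine or_congr ?_ ?_
  · have : Matrix.scalar (Fin n) ((r:ℂ) * z) - (LinearMap.toMatrix' A).map (algebraMap ℝ ℂ)
        = (r : ℂ) • (Matrix.scalar (Fin n) z - (r⁻¹ • LinearMap.toMatrix' A).map (algebraMap ℝ ℂ)) := by
      ext i j
      simp [Matrix.diagonal_apply, mul_sub, hr']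
    rw [this, Matrix.det_smul]
    simp [hr']
  · simp [eq_neg_iff_add_eq_zero]

/-- If `e⁺` is a hyperbolic sink of the future limit system (all complex
eigenvalues of `A = D_x f(e⁺,λ⁺)` have negative real part), then for every `r > 0` and
`α ∈ (0,ρ]`: all complex eigenvalues of the derivative of `F_{r,α}` at `(e⁺,1)` have
negative real part, `-α` is such an eigenvalue, and if moreover `α·r < -Re z` for every
eigenvalue `z` of `A`, then every eigenvalue other than `-α` has real part `< -α`. -/
theorem stmt8 {n d : ℕ} (f : (Fin n → ℝ) × (Fin d → ℝ) → Fin n → ℝ)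
    (hf : ContDiff ℝ 1 f)
    (Λ : ℝ → Fin d → ℝ) (ρ : ℝ) (hρ : 0 < ρ)
    (hΛ : ContDiff ℝ 1 Λ) (hbac : ExpBiAsympConst Λ ρ)
    (lp lm : Fin d → ℝ)
    (hp : Tendsto Λ atTop (𝓝 lp)) (hm : Tendsto Λ atBot (𝓝 lm))
    (ep : Fin n → ℝ) (heq : f (ep, lp) = 0)
    (hsink : ∀ z ∈ complexRoots
        (fderiv ℝ (fun x => f (x, lp)) ep).toLinearMap.charpoly, z.re < 0) :
    ∀ r > (0 : ℝ), ∀ α ∈ Set.Ioc (0 : ℝ) ρ,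
      ∃ L : ((Fin n → ℝ) × ℝ) →L[ℝ] ((Fin n → ℝ) × ℝ),
        HasFDerivWithinAt (compField f Λ lp lm r α) L (compDomain n) (ep, 1) ∧
        (∀ z ∈ complexRoots L.toLinearMap.charpoly, z.re < 0) ∧
        (-(α : ℂ) ∈ complexRoots L.toLinearMap.charpoly) ∧
        ((∀ z ∈ complexRoots
            (fderiv ℝ (fun x => f (x, lp)) ep).toLinearMap.charpoly, α * r < -z.re) →
          ∀ z ∈ complexRoots L.toLinearMap.charpoly, z ≠ -(α : ℂ) → z.re < -α) := by
  intro r hr α hα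
  obtain ⟨D, hD⟩ := aux_compInput Λ ρ hΛ hbac lp lm hp α hα.1 hα.2
  have hfd := (hf.differentiable (by norm_num) (ep, lp)).hasFDerivAt
  set f' := fderiv ℝ f (ep, lp) with hf'
  have hA : fderiv ℝ (fun x => f (x, lp)) ep
      = f'.comp (ContinuousLinearMap.inl ℝ (Fin n → ℝ) (Fin d → ℝ)) :=
    (hfd.comp ep (hasFDerivAt_prodMk_left ep lp)).fderiv
  have h1 : compInput Λ lp lm α 1 = lp := by simp [compInput]
  have hin : HasFDerivWithinAt (fun p : (Fin n → ℝ) × ℝ => (p.1, compInput Λ lp lm α p.2))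
      ((ContinuousLinearMap.fst ℝ (Fin n → ℝ) ℝ).prod
        ((ContinuousLinearMap.toSpanSingleton ℝ D).comp
          (ContinuousLinearMap.snd ℝ (Fin n → ℝ) ℝ))) (compDomain n) (ep, 1) := by
    refine hasFDerivWithinAt_fst.prodMk ?_
    refine HasFDerivWithinAt.comp (t := Set.Iic (1:ℝ)) (g := compInput Λ lp lm α)
      (ep, (1:ℝ)) hD.hasFDerivWithinAt hasFDerivWithinAt_snd ?_
    intro p hp
    exact hp.2.2
  have hfst := (HasFDerivAt.comp_hasFDerivWithinAt (g := f) (ep, (1:ℝ))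
    (by simpa only [h1] using hfd) hin).const_smul r⁻¹
  have hsc : HasDerivAt (fun s : ℝ => α * (1 - s ^ 2) / 2) (-α) 1 := by
    have := ((((hasDerivAt_id' (1:ℝ)).pow 2).const_sub 1).const_mul α).div_const 2
    refine this.congr_deriv ?_
    norm_num; ring
  have hsnd : HasFDerivWithinAt (fun p : (Fin n → ℝ) × ℝ => α * (1 - p.2 ^ 2) / 2)
      ((ContinuousLinearMap.toSpanSingleton ℝ (-α)).comp
          (ContinuousLinearMap.snd ℝ (Fin n → ℝ) ℝ)) (compDomain n) (ep, 1) :=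
    HasFDerivAt.comp_hasFDerivWithinAt (g := fun s : ℝ => α * (1 - s ^ 2) / 2) (ep, (1:ℝ))
      hsc.hasFDerivAt hasFDerivWithinAt_snd
  obtain ⟨L, hL, hLv⟩ : ∃ L : ((Fin n → ℝ) × ℝ) →L[ℝ] ((Fin n → ℝ) × ℝ),
      HasFDerivWithinAt (compField f Λ lp lm r α) L (compDomain n) (ep, 1) ∧
      ∀ x s, L (x, s) = (r⁻¹ • f' (x, s • D), s * (-α)) :=
    ⟨_, hfst.prodMk hsnd, fun x s => rfl⟩
  refine ⟨L, hL, ?_⟩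
  have key := aux_roots (fderiv ℝ (fun x => f (x, lp)) ep).toLinearMap (r⁻¹ • f' (0, D)) r α hr
    L.toLinearMap (fun x s => by
      have h2 : f' (x, s • D) = f' (x, 0) + s • f' (0, D) := by
        rw [← map_smul, ← map_add]; simp
      have h3 : L.toLinearMap (x, s) = L (x, s) := rfl
      rw [h3, hLv, hA, h2]
      simp [smul_comm s, mul_comm])
  simp only [key]
  refine ⟨?_, Or.inr trivial, ?_⟩
  · rintro z (hz | rfl)
    · have := hsink _ hz
      simp only [Complex.re_ofReal_mul] at this
      by_contra h
      nlinarith [mul_nonneg hr.le (not_lt.1 h)]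
    · simpa using hα.1
  · intro H z hz hne
    have := H _ (hz.resolve_right hne)
    simp only [Complex.re_ofReal_mul] at this
    by_contra h
    nlinarith
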